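/- Let p ≥ 2 and let G = K_{n_1, …, n_p} be the complete multipartite graph with parts of sizes n_1, …, n_p ≥ 1, and let n = Σ_{i=1}^p n_i. Then for every m with 2 ≤ m ≤ n, the m-Steiner Wiener index of G equals SW_m(G) = (m − 1)·C(n, m) + Σ_{i=1}^p C(n_i, m). -/

import Mathlib

open SimpleGraph

/-- The *Steiner distance* of a set `S` of vertices of `G`: the minimum number of edges
of a connected subgraph of `G` containing all vertices of `S`. -/
noncomputable def steinerDist {V : Type*} (G : SimpleGraph V) (S : Set V) : ℕ :=
  sInf {n | ∃ T : G.Subgraph, T.Connected ∧ S ⊆ T.verts ∧ T.edgeSet.ncard = n}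

/-- The *m-Steiner Wiener index* of `G`: the sum of the Steiner distances of all
`m`-element subsets of the vertex set of `G`. -/
noncomputable def steinerWiener {V : Type*} [Fintype V] (m : ℕ) (G : SimpleGraph V) : ℕ :=
  ∑ S ∈ Finset.powersetCard m (Finset.univ : Finset V), steinerDist G (S : Set V)

lemma aux_edge_ncard {V : Type*} {G : SimpleGraph V} (T : G.Subgraph) :
    T.edgeSet.ncard = Nat.card T.coe.edgeSet := by
  rw [← T.image_coe_edgeSet_coe, Set.ncard_image_of_injective _
    (Sym2.map.injective Subtype.val_injective)]
  rfl

lemma aux_lower {V : Type*} [Finite V] {G : SimpleGraph V} (T : G.Subgraph) (hT : T.Connected) :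
    T.verts.ncard ≤ T.edgeSet.ncard + 1 := by
  rw [aux_edge_ncard]
  exact hT.coe.card_vert_le_card_edgeSet_add_one

lemma aux_upper {V : Type*} [Finite V] {G : SimpleGraph V} (W : Set V)
    (hW : (G.induce W).Connected) :
    ∃ T : G.Subgraph, T.Connected ∧ T.verts = W ∧ T.edgeSet.ncard + 1 = W.ncard := by
  obtain ⟨H, hle, hH⟩ := hW.exists_isTree_le
  let T : G.Subgraph :=
    { verts := W
      Adj := fun a b => ∃ (ha : a ∈ W) (hb : b ∈ W), H.Adj ⟨a, ha⟩ ⟨b, hb⟩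
      adj_sub := by
        rintro a b ⟨ha, hb, h⟩
        exact hle h
      edge_vert := by
        rintro a b ⟨ha, hb, h⟩
        exact ha
      symm := ⟨by
        rintro a b ⟨ha, hb, h⟩
        exact ⟨hb, ha, h.symm⟩⟩ }
  have hc : T.coe = H := by
    ext ⟨a, ha⟩ ⟨b, hb⟩
    constructor
    · rintro ⟨_, _, h⟩
      exact h
    · intro h
      exact ⟨ha, hb, h⟩
  refine ⟨T, ⟨?_⟩, rfl, ?_⟩
  · rw [hc]; exact hH.connected
  · rw [aux_edge_ncard, hc]
    exact (isTree_iff_connected_and_card.1 hH).2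

lemma aux_conn {ι : Type*} {F : ι → Type*} (W : Set (Σ i, F i)) (a b : Σ i, F i)
    (ha : a ∈ W) (hb : b ∈ W) (hab : a.1 ≠ b.1) :
    ((completeMultipartiteGraph F).induce W).Connected := by
  have key : ∀ u : W, ((completeMultipartiteGraph F).induce W).Reachable u ⟨a, ha⟩ := by
    rintro ⟨u, hu⟩
    by_cases h : u.1 = a.1
    · have h1 : ((completeMultipartiteGraph F).induce W).Adj ⟨u, hu⟩ ⟨b, hb⟩ := by
        simpa [h] using hab
      have h2 : ((completeMultipartiteGraph F).induce W).Adj ⟨b, hb⟩ ⟨a, ha⟩ := by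
        simpa using hab.symm
      exact h1.reachable.trans h2.reachable
    · have h1 : ((completeMultipartiteGraph F).induce W).Adj ⟨u, hu⟩ ⟨a, ha⟩ := by
        simpa using h
      exact h1.reachable
  have : Nonempty W := ⟨⟨a, ha⟩⟩
  exact ⟨fun u v => (key u).trans (key v).symm⟩

lemma aux_dist_eq {V : Type*} {G : SimpleGraph V} (S : Set V) (k : ℕ)
    (h1 : ∃ T : G.Subgraph, T.Connected ∧ S ⊆ T.verts ∧ T.edgeSet.ncard = k)
    (h2 : ∀ T : G.Subgraph, T.Connected → S ⊆ T.verts → k ≤ T.edgeSet.ncard) :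
    steinerDist G S = k := by
  apply le_antisymm
  · exact Nat.sInf_le h1
  · refine le_csInf ⟨k, h1⟩ ?_
    rintro _ ⟨T, hT, hS, rfl⟩
    exact h2 T hT hS

lemma aux_dist_diff {ι : Type*} {F : ι → Type*} [Finite (Σ i, F i)] (S : Set (Σ i, F i))
    (a b : Σ i, F i) (ha : a ∈ S) (hb : b ∈ S) (hab : a.1 ≠ b.1) :
    steinerDist (completeMultipartiteGraph F) S = S.ncard - 1 := by
  apply aux_dist_eq
  · obtain ⟨T, hT, hv, he⟩ := aux_upper S (aux_conn S a b ha hb hab)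
    exact ⟨T, hT, hv.ge, by omega⟩
  · intro T hT hS
    have := aux_lower T hT
    have := Set.ncard_le_ncard hS
    omega

lemma aux_dist_same {ι : Type*} {F : ι → Type*} [Finite (Σ i, F i)] (S : Set (Σ i, F i))
    (i : ι) (hSi : ∀ a ∈ S, a.1 = i) (w : Σ i, F i) (hw : w.1 ≠ i) (hS2 : 2 ≤ S.ncard) :
    steinerDist (completeMultipartiteGraph F) S = S.ncard := by
  obtain ⟨a, ha, b, hb, hab⟩ := (Set.one_lt_ncard).1 hS2
  have hwS : w ∉ S := fun h => hw (hSi w h)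
  apply aux_dist_eq
  · obtain ⟨T, hT, hv, he⟩ := aux_upper (insert w S) (aux_conn (insert w S) w a
      (Set.mem_insert _ _) (Set.mem_insert_of_mem _ ha) (by rw [hSi a ha]; exact hw))
    rw [Set.ncard_insert_of_notMem hwS] at he
    exact ⟨T, hT, (Set.subset_insert _ _).trans hv.ge, by omega⟩
  · intro T hT hS
    have h1 := aux_lower T hT
    have : Nontrivial T.verts := ⟨⟨a, hS ha⟩, ⟨b, hS hb⟩, by simpa using hab⟩
    obtain ⟨u, hu⟩ := hT.preconnected.exists_adj_of_nontrivial ⟨a, hS ha⟩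
    have hadj : a.1 ≠ u.1 := by simpa using T.adj_sub hu
    have huS : u ∉ S := fun h => hadj ((hSi a ha).trans (hSi u h).symm)
    have h2 : (insert u S).ncard ≤ T.verts.ncard := Set.ncard_le_ncard
      (Set.insert_subset hu.symm.fst_mem hS)
    rw [Set.ncard_insert_of_notMem huS] at h2
    omega

/-- Let `p ≥ 2` and let `G = K_{n 1, …, n p}` be the complete
multipartite graph with parts of sizes `n 1, …, n p ≥ 1`, and let `n = Σ_{i=1}^p n i`.
Then for every `m` with `2 ≤ m ≤ n`, the `m`-Steiner Wiener index of `G` equals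
`SW_m(G) = (m − 1)·C(n, m) + Σ_{i=1}^p C(n i, m)`. -/
theorem steinerWiener_completeMultipartite {p : ℕ} (hp : 2 ≤ p)
    (n : Fin p → ℕ) (hn : ∀ i, 1 ≤ n i)
    (m : ℕ) (hm : 2 ≤ m) (hmn : m ≤ ∑ i, n i) :
    steinerWiener m (completeMultipartiteGraph fun i => Fin (n i)) =
      (m - 1) * (∑ i, n i).choose m + ∑ i, (n i).choose m := by
  classical
  have key : ∀ S ∈ Finset.powersetCard m (Finset.univ : Finset (Σ i, Fin (n i))),
      steinerDist (completeMultipartiteGraph fun i => Fin (n i)) (S : Set (Σ i, Fin (n i))) =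
        (m - 1) + ∑ i, if (∀ a ∈ S, a.1 = i) then 1 else 0 := by
    intro S hS
    have hc : S.card = m := (Finset.mem_powersetCard.1 hS).2
    have hc' : (S : Set (Σ i, Fin (n i))).ncard = m := by rw [Set.ncard_coe_finset, hc]
    obtain ⟨a, ha⟩ : S.Nonempty := Finset.card_pos.1 (by omega)
    by_cases h : ∀ b ∈ S, b.1 = a.1
    · have hsum : (∑ i, if (∀ b ∈ S, b.1 = i) then 1 else 0) = 1 := by
        rw [Finset.sum_eq_single a.1, if_pos h]
        · intro i _ hi
          rw [if_neg]
          intro h'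
          exact hi (h' a ha).symm
        · simp
      have : Nontrivial (Fin p) := Fin.nontrivial_iff_two_le.2 hp
      obtain ⟨j, hj⟩ := exists_ne a.1
      rw [hsum, aux_dist_same (S : Set (Σ i, Fin (n i))) a.1 (by simpa using h)
        ⟨j, ⟨0, hn j⟩⟩ hj (by omega)]
      omega
    · push Not at h
      obtain ⟨b, hb, hba⟩ := h
      have hsum : (∑ i, if (∀ b ∈ S, b.1 = i) then 1 else 0) = 0 := by
        apply Finset.sum_eq_zero
        intro i _
        rw [if_neg]
        intro h'
        exact hba ((h' b hb).trans (h' a ha).symm)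
      rw [hsum, aux_dist_diff (S : Set (Σ i, Fin (n i))) b a hb ha hba, hc']
      omega
  unfold steinerWiener
  rw [Finset.sum_congr rfl key, Finset.sum_add_distrib, Finset.sum_const, Finset.sum_comm,
    Finset.card_powersetCard, Finset.card_univ, Fintype.card_sigma]
  simp only [Fintype.card_fin, smul_eq_mul]
  rw [mul_comm]
  congr 1
  apply Finset.sum_congr rfl
  intro i _
  rw [← Finset.card_filter]
  have : (Finset.powersetCard m (Finset.univ : Finset (Σ i, Fin (n i)))).filter
      (fun S => ∀ a ∈ S, a.1 = i) = Finset.powersetCard m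
        ((Finset.univ : Finset (Fin (n i))).map (Function.Embedding.sigmaMk i)) := by
    ext S
    simp only [Finset.mem_filter, Finset.mem_powersetCard, Finset.subset_univ, true_and]
    rw [and_comm]
    refine and_congr_left fun _ => ?_
    constructor
    · rintro h ⟨j, x⟩ hx
      obtain rfl : j = i := h _ hx
      simp
    · intro h x hx
      have := h hx
      simp only [Finset.mem_map, Finset.mem_univ, true_and] at this
      obtain ⟨y, rfl⟩ := this
      rfl
  rw [this, Finset.card_powersetCard, Finset.card_map, Finset.card_univ, Fintype.card_fin]
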